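/- arXiv:math/0407326 — 7 statements merged into one kernel-verified Lean document; each statement's English description precedes it below -/
import Mathlib

section
/- For every natural number n, the exponent of the largest power of 2 dividing the n-th Catalan number C_n equals δ(n+1) − 1, i.e., the 2-adic valuation of C_n is one less than the number of ones in the binary expansion of n+1. -/
theorem count_eq_sum_aux (l : List ℕ) (h : ∀ x ∈ l, x < 2) : l.sum = l.count 1 := by
  induction l with
  | nil => simp
  | cons a t ih =>
    have ha : a < 2 := h a (by simp)
    have ih' := ih (fun x hx => h x (by simp [hx]))
    interval_cases a
    · simp [ih']
    · simp [ih', Nat.add_comm]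

/-- The 2-adic valuation of the `n`-th Catalan number equals one less than the
number of ones in the binary expansion of `n + 1`. -/
theorem catalan_two_adic_valuation (n : ℕ) :
    padicValNat 2 (catalan n) = (Nat.digits 2 (n + 1)).count 1 - 1 := by
  rw [← count_eq_sum_aux _ (fun x hx => Nat.digits_lt_base (by norm_num) hx)]
  have key : catalan n * (n + 1).factorial * n.factorial = (2 * n).factorial := by
    have h1 := succ_mul_catalan_eq_centralBinom n
    have h2 := Nat.choose_mul_factorial_mul_factorial (n := 2 * n) (k := n) (by omega)
    rw [← Nat.centralBinom_eq_two_mul_choose, ← h1, show 2 * n - n = n by omega] at h2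
    rw [← h2, Nat.factorial_succ]
    ring
  have hc : catalan n ≠ 0 := by
    intro h
    rw [h] at key
    simp at key
    exact (Nat.factorial_ne_zero _ key.symm)
  have hv := congrArg (padicValNat 2) key
  rw [padicValNat.mul (mul_ne_zero hc (Nat.factorial_ne_zero _)) (Nat.factorial_ne_zero _),
    padicValNat.mul hc (Nat.factorial_ne_zero _)] at hv
  have a1 := sub_one_mul_padicValNat_factorial (p := 2) n
  have a2 := sub_one_mul_padicValNat_factorial (p := 2) (n + 1)
  have a3 := sub_one_mul_padicValNat_factorial (p := 2) (2 * n)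
  have b1 := Nat.digit_sum_le 2 n
  have b2 := Nat.digit_sum_le 2 (n + 1)
  have s : (Nat.digits 2 (2 * n)).sum = (Nat.digits 2 n).sum := by
    rcases Nat.eq_zero_or_pos n with rfl | hn
    · simp
    · rw [Nat.digits_base_mul (by norm_num) hn]
      simp
  omega
end

section
/- The Catalan number C_n is odd if and only if n = 2^h − 1 for some natural number h. -/
lemma cat_aux (n : ℕ) :
    ∑ p ∈ (Finset.HasAntidiagonal.antidiagonal n).filter (fun p => p.1 ≠ p.2),
      ((catalan p.1 : ZMod 2) * (catalan p.2 : ZMod 2)) = 0 := by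
  refine Finset.sum_involution (fun p _ => p.swap) ?_ ?_ ?_ ?_
  · intro p _
    simp only [Prod.fst_swap, Prod.snd_swap]
    rw [mul_comm (catalan p.2 : ZMod 2)]
    exact CharTwo.add_self_eq_zero _
  · intro p hp _ h
    simp only [Finset.mem_filter] at hp
    exact hp.2 (congrArg Prod.snd h)
  · intro p hp
    simp only [Finset.mem_filter, Finset.HasAntidiagonal.mem_antidiagonal, Prod.fst_swap, Prod.snd_swap] at hp ⊢
    omega
  · intro p _
    simp

lemma cat_even (m : ℕ) : ¬ Odd (catalan (2 * m + 2)) := by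
  rw [← ZMod.natCast_eq_one_iff_odd, catalan_succ']
  have h := cat_aux (2 * m + 1)
  rw [Finset.filter_true_of_mem] at h
  · push_cast
    rw [h]
    decide
  · intro p hp
    rw [Finset.HasAntidiagonal.mem_antidiagonal] at hp
    omega

lemma cat_odd (m : ℕ) : Odd (catalan (2 * m + 1)) ↔ Odd (catalan m) := by
  have h := cat_aux (2 * m)
  have e : (Finset.HasAntidiagonal.antidiagonal (2 * m)).filter (fun p => p.1 ≠ p.2)
      = (Finset.HasAntidiagonal.antidiagonal (2 * m)).erase (m, m) := by
    ext ⟨a, b⟩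
    simp only [Finset.mem_filter, Finset.mem_erase, Finset.HasAntidiagonal.mem_antidiagonal, ne_eq, Prod.mk.injEq]
    omega
  rw [e] at h
  have hm : (m, m) ∈ Finset.HasAntidiagonal.antidiagonal (2 * m) := by
    rw [Finset.HasAntidiagonal.mem_antidiagonal]; omega
  rw [← ZMod.natCast_eq_one_iff_odd, catalan_succ']
  push_cast
  rw [← Finset.add_sum_erase _ _ hm, h, add_zero, ← Nat.cast_mul, ZMod.natCast_eq_one_iff_odd,
    Nat.odd_mul, and_self]

/-- The Catalan number `C n` is odd iff `n = 2 ^ h - 1` for some `h`. -/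
theorem catalan_odd_iff (n : ℕ) :
    Odd (catalan n) ↔ ∃ h : ℕ, n = 2 ^ h - 1 := by
  induction n using Nat.strong_induction_on with
  | _ n ih =>
    rcases Nat.even_or_odd' n with ⟨m, rfl | rfl⟩
    · rcases m with _ | m
      · simp only [mul_zero, catalan_zero, odd_one, true_iff]
        exact ⟨0, rfl⟩
      · refine iff_of_false (cat_even m) ?_
        rintro ⟨h, hh⟩
        rcases h with _ | h
        · simp at hh
        · rw [pow_succ] at hh
          have := Nat.two_pow_pos h
          omega
    · rw [cat_odd, ih m (by omega)]
      constructor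
      · rintro ⟨h, hh⟩
        refine ⟨h + 1, ?_⟩
        have := Nat.two_pow_pos h
        rw [pow_succ]
        omega
      · rintro ⟨h, hh⟩
        rcases h with _ | h
        · simp at hh
        · refine ⟨h, ?_⟩
          rw [pow_succ] at hh
          omega
end

section
/- For every natural number n, the central binomial coefficient satisfies: binomial(2n, n) ≡ (−1)^{δ_3(n)} (mod 3) if n ∈ T(01), and binomial(2n, n) ≡ 0 (mod 3) otherwise. -/
/-- `T(01)`: the natural numbers all of whose base-3 digits are `0` or `1`. -/
def T01 : Set ℕ := {n | ∀ d ∈ Nat.digits 3 n, d = 0 ∨ d = 1}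

/-- `δ_3 n`: the number of base-3 digits of `n` equal to `1`. -/
def delta3 (n : ℕ) : ℕ := (Nat.digits 3 n).count 1

/-- Central binomial coefficients mod 3: `C(2n, n) ≡ (-1)^{δ_3(n)} (mod 3)` if all
base-3 digits of `n` are `0` or `1`, and `C(2n, n) ≡ 0 (mod 3)` otherwise. -/
theorem centralBinom_mod_three (n : ℕ) :
    (n ∈ T01 → ((2 * n).choose n : ℤ) ≡ (-1) ^ delta3 n [ZMOD 3]) ∧
    (n ∉ T01 → ((2 * n).choose n : ℤ) ≡ 0 [ZMOD 3]) := by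
  induction n using Nat.strong_induction_on with
  | _ n ih =>
  rcases Nat.eq_zero_or_pos n with rfl | hn
  · simp [T01, delta3]
  have hp : Fact (Nat.Prime 3) := ⟨Nat.prime_three⟩
  have hd : Nat.digits 3 n = (n % 3) :: Nat.digits 3 (n / 3) :=
    Nat.digits_def' (by norm_num) hn
  have hL := Choose.choose_modEq_choose_mod_mul_choose_div (p := 3) (n := 2 * n) (k := n)
  obtain ⟨ih1, ih2⟩ := ih (n / 3) (by omega)
  have h3 : n % 3 = 0 ∨ n % 3 = 1 ∨ n % 3 = 2 := by omega
  rcases h3 with h | h | h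
  · have e1 : 2 * n % 3 = 0 := by omega
    have e2 : 2 * n / 3 = 2 * (n / 3) := by omega
    rw [e1, e2, h] at hL
    have hT : n ∈ T01 ↔ n / 3 ∈ T01 := by simp [T01, hd, h]
    have hD : delta3 n = delta3 (n / 3) := by simp [delta3, hd, h]
    rw [hT, hD]
    simp only [Nat.choose_self, Nat.cast_one, one_mul] at hL
    exact ⟨fun t => hL.trans (ih1 t), fun t => hL.trans (ih2 t)⟩
  · have e1 : 2 * n % 3 = 2 := by omega
    have e2 : 2 * n / 3 = 2 * (n / 3) := by omega
    rw [e1, e2, h] at hL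
    have hT : n ∈ T01 ↔ n / 3 ∈ T01 := by simp [T01, hd, h]
    have hD : delta3 n = delta3 (n / 3) + 1 := by simp [delta3, hd, h]
    rw [hT, hD, pow_succ']
    have h2 : (((2 : ℕ).choose 1 : ℕ) : ℤ) ≡ -1 [ZMOD 3] := by decide
    refine ⟨fun t => hL.trans (h2.mul (ih1 t)), fun t => ?_⟩
    have := hL.trans (h2.mul (ih2 t))
    simpa using this
  · have e1 : 2 * n % 3 = 1 := by omega
    rw [e1, h] at hL
    have hT : n ∉ T01 := by simp [T01, hd, h]
    refine ⟨fun t => absurd t hT, fun _ => ?_⟩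
    simpa using hL
end

section
/- Let A = {n ∈ ℕ : binomial(2n, n) ≡ 1 (mod 3)}, which is an infinite set, and let a_0 < a_1 < a_2 < ... be its elements in increasing order. Then for every i ∈ ℕ, a_i ≡ t_i (mod 3), where t is the Thue–Morse sequence. -/
/-- The Thue–Morse sequence: `t n` is the parity of the number of ones in the
binary expansion of `n`. -/
def thueMorse (n : ℕ) : ℕ := (Nat.digits 2 n).count 1 % 2

theorem tm_even (n : ℕ) : thueMorse (2 * n) = thueMorse n := by
  unfold thueMorse
  rcases Nat.eq_zero_or_pos n with rfl | h
  · rfl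
  · rw [Nat.digits_def' (by norm_num) (by omega)]
    simp

theorem tm_odd (n : ℕ) : thueMorse (2 * n + 1) = 1 - thueMorse n := by
  unfold thueMorse
  rw [Nat.digits_def' (by norm_num) (by omega)]
  have h1 : (2 * n + 1) % 2 = 1 := by omega
  have h2 : (2 * n + 1) / 2 = n := by omega
  rw [h1, h2, List.count_cons_self]
  omega

theorem tm_lt (n : ℕ) : thueMorse n < 2 := Nat.mod_lt _ (by norm_num)

def tmG (n : ℕ) : ℕ := Nat.ofDigits 3 (Nat.digits 2 n)

theorem tmG_even (n : ℕ) : tmG (2 * n) = 3 * tmG n := by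
  unfold tmG
  rcases Nat.eq_zero_or_pos n with rfl | h
  · rfl
  · rw [Nat.digits_def' (by norm_num) (by omega), Nat.ofDigits_cons]
    simp

theorem tmG_odd (n : ℕ) : tmG (2 * n + 1) = 3 * tmG n + 1 := by
  unfold tmG
  rw [Nat.digits_def' (by norm_num) (by omega), Nat.ofDigits_cons]
  have h1 : (2 * n + 1) % 2 = 1 := by omega
  have h2 : (2 * n + 1) / 2 = n := by omega
  rw [h1, h2]
  push_cast
  ring

theorem tmG_lt (n : ℕ) : tmG n < tmG (n + 1) := by
  induction n using Nat.strong_induction_on with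
  | _ n ih =>
    rcases Nat.even_or_odd' n with ⟨k, rfl | rfl⟩
    · rw [tmG_even, tmG_odd]; omega
    · have := ih k (by omega)
      rw [tmG_odd, show 2 * k + 1 + 1 = 2 * (k + 1) by ring, tmG_even]; omega

instance tmFact : Fact (Nat.Prime 3) := ⟨Nat.prime_three⟩

theorem c_zero (m : ℕ) : (2 * (3 * m)).choose (3 * m) % 3 = (2 * m).choose m % 3 := by
  have h := Choose.choose_modEq_choose_mod_mul_choose_div_nat
    (n := 2 * (3 * m)) (k := 3 * m) (p := 3)
  rw [show 2 * (3 * m) % 3 = 0 by omega, show 3 * m % 3 = 0 by omega,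
    show 2 * (3 * m) / 3 = 2 * m by omega, show 3 * m / 3 = m by omega] at h
  simpa [Nat.ModEq] using h

theorem c_one (m : ℕ) :
    (2 * (3 * m + 1)).choose (3 * m + 1) % 3 = 2 * (2 * m).choose m % 3 := by
  have h := Choose.choose_modEq_choose_mod_mul_choose_div_nat
    (n := 2 * (3 * m + 1)) (k := 3 * m + 1) (p := 3)
  rw [show 2 * (3 * m + 1) % 3 = 2 by omega, show (3 * m + 1) % 3 = 1 by omega,
    show 2 * (3 * m + 1) / 3 = 2 * m by omega, show (3 * m + 1) / 3 = m by omega] at h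
  simpa [Nat.ModEq] using h

theorem c_two (m : ℕ) :
    (2 * (3 * m + 2)).choose (3 * m + 2) % 3 = 0 := by
  have h := Choose.choose_modEq_choose_mod_mul_choose_div_nat
    (n := 2 * (3 * m + 2)) (k := 3 * m + 2) (p := 3)
  rw [show 2 * (3 * m + 2) % 3 = 1 by omega, show (3 * m + 2) % 3 = 2 by omega] at h
  simpa [Nat.ModEq] using h

theorem c_tmG (n : ℕ) : (2 * tmG n).choose (tmG n) % 3 = 1 + thueMorse n := by
  induction n using Nat.strong_induction_on with
  | _ n ih =>
    rcases Nat.eq_zero_or_pos n with rfl | h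
    · simp [tmG, thueMorse]
    rcases Nat.even_or_odd' n with ⟨k, rfl | rfl⟩
    · rw [tmG_even, c_zero, tm_even, ih k (by omega)]
    · have := ih k (by omega)
      have := tm_lt k
      rw [tmG_odd, c_one, tm_odd]; omega

theorem c_range (n : ℕ) (h : (2 * n).choose n % 3 ≠ 0) : ∃ j, tmG j = n := by
  induction n using Nat.strong_induction_on with
  | _ n ih =>
    rcases Nat.eq_zero_or_pos n with rfl | hn
    · exact ⟨0, by simp [tmG]⟩
    obtain ⟨m, h3⟩ : ∃ m, n = 3 * m ∨ n = 3 * m + 1 ∨ n = 3 * m + 2 := ⟨n / 3, by omega⟩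
    rcases h3 with rfl | rfl | rfl
    · rw [c_zero] at h
      obtain ⟨j, hj⟩ := ih m (by omega) h
      exact ⟨2 * j, by rw [tmG_even, hj]⟩
    · rw [c_one] at h
      obtain ⟨j, hj⟩ := ih m (by omega) (by omega)
      exact ⟨2 * j + 1, by rw [tmG_odd, hj]⟩
    · exact absurd (c_two m) h

def tmF (n : ℕ) : ℕ := 3 * tmG n + thueMorse n

theorem tmF_strictMono : StrictMono tmF := by
  apply strictMono_nat_of_lt_succ
  intro n
  have := tmG_lt n
  have := tm_lt n
  unfold tmF
  omega

theorem tmF_mem (n : ℕ) : (2 * tmF n).choose (tmF n) % 3 = 1 := by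
  have h1 := c_tmG n
  have h2 := tm_lt n
  unfold tmF
  rcases (by omega : thueMorse n = 0 ∨ thueMorse n = 1) with h | h
  · rw [h, add_zero, c_zero]; omega
  · rw [h, c_one]; omega

theorem tmF_range (n : ℕ) (h : (2 * n).choose n % 3 = 1) : n ∈ Set.range tmF := by
  obtain ⟨m, h3⟩ : ∃ m, n = 3 * m ∨ n = 3 * m + 1 ∨ n = 3 * m + 2 := ⟨n / 3, by omega⟩
  rcases h3 with rfl | rfl | rfl
  · rw [c_zero] at h
    obtain ⟨j, rfl⟩ := c_range m (by omega)
    rw [c_tmG] at h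
    exact ⟨j, by unfold tmF; omega⟩
  · rw [c_one] at h
    obtain ⟨j, rfl⟩ := c_range m (by omega)
    have := c_tmG j
    have := tm_lt j
    exact ⟨j, by unfold tmF; omega⟩
  · have := c_two m
    omega

/-- The set `A` of `n` with `C(2n, n) ≡ 1 (mod 3)` is infinite, and its `i`-th
element `a_i` (in increasing order) satisfies `a_i ≡ t_i (mod 3)` where `t` is the
Thue–Morse sequence. -/
theorem nth_centralBinom_one_mod_three :
    {n : ℕ | (2 * n).choose n % 3 = 1}.Infinite ∧
    ∀ i : ℕ, Nat.nth (fun n => (2 * n).choose n % 3 = 1) i ≡ thueMorse i [MOD 3] := by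
  have hinf : {n : ℕ | (2 * n).choose n % 3 = 1}.Infinite :=
    Set.infinite_of_injective_forall_mem tmF_strictMono.injective tmF_mem
  refine ⟨hinf, fun i => ?_⟩
  have h := Nat.nth_comp_of_strictMono (p := fun n => (2 * n).choose n % 3 = 1) (n := i)
    tmF_strictMono tmF_range (fun hf => absurd hf hinf)
  rw [← h]
  have h2 : (fun i => (2 * tmF i).choose (tmF i) % 3 = 1) = fun _ => True := by
    funext j
    simp [tmF_mem j]
  simp only [tmF_mem, Nat.nth_true]
  unfold tmF Nat.ModEq
  omega
end

section
/- For every natural number n, the central trinomial coefficient satisfies: T_n ≡ 1 (mod 3) if n ∈ T(01), and T_n ≡ 0 (mod 3) otherwise. -/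
open Polynomial in
/-- The central trinomial coefficient: the coefficient of `x^n` in `(1 + x + x^2)^n`. -/
noncomputable def centralTrinomial (n : ℕ) : ℤ :=
  (((1 : ℤ[X]) + X + X ^ 2) ^ n).coeff n

open Polynomial in
theorem ct_cast (n : ℕ) :
    ((centralTrinomial n : ℤ) : ZMod 3) = 2 ^ n * ((2 * n).choose n : ZMod 3) := by
  have h : ((centralTrinomial n : ℤ) : ZMod 3)
      = (((1 : (ZMod 3)[X]) + X + X ^ 2) ^ n).coeff n := by
    have := Polynomial.coeff_map (p := ((1 : ℤ[X]) + X + X ^ 2) ^ n) (Int.castRingHom (ZMod 3)) n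
    simp only [Polynomial.map_pow, Polynomial.map_add, Polynomial.map_one, Polynomial.map_X] at this
    rw [this]
    rfl
  have h2 : (1 : (ZMod 3)[X]) + X + X ^ 2 = (X + C 2) ^ 2 := by
    have h4 : (C (2 : ZMod 3)) ^ 2 = 1 := by
      rw [← C_pow, show (2 : ZMod 3) ^ 2 = 1 from by decide, C_1]
    have h5 : (2 : (ZMod 3)[X]) * C 2 = 1 := by
      have : (2 : (ZMod 3)[X]) = C 2 := (C_ofNat 2).symm
      rw [this, ← pow_two, h4]
    linear_combination -h4 - X * h5
  rw [h, h2, ← pow_mul, coeff_X_add_C_pow]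
  congr 2
  omega

theorem ct_step (m r : ℕ) (hr : r < 3) :
    ((centralTrinomial (r + 3 * m) : ℤ) : ZMod 3) =
      if r = 2 then 0 else ((centralTrinomial m : ℤ) : ZMod 3) := by
  have L := Choose.choose_modEq_choose_mod_mul_choose_div_nat
    (p := 3) (n := 2 * (r + 3 * m)) (k := r + 3 * m)
  rw [← ZMod.natCast_eq_natCast_iff] at L
  rw [ct_cast, ct_cast, L, pow_add, pow_mul, show (2 : ZMod 3) ^ 3 = 2 from by decide]
  have e1 : (r + 3 * m) % 3 = r := by omega
  have e2 : (r + 3 * m) / 3 = m := by omega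
  rw [e1, e2]
  interval_cases r
  · rw [show 2 * (0 + 3 * m) % 3 = 0 by omega, show 2 * (0 + 3 * m) / 3 = 2 * m by omega]
    simp
  · rw [show 2 * (1 + 3 * m) % 3 = 2 by omega, show 2 * (1 + 3 * m) / 3 = 2 * m by omega]
    have : (2 : ZMod 3) * 2 = 1 := by decide
    simp
    linear_combination (2 ^ m * ((2 * m).choose m : ZMod 3)) * this
  · rw [show 2 * (2 + 3 * m) % 3 = 1 by omega]
    simp

theorem T01_step (m r : ℕ) (hr : r < 3) : r + 3 * m ∈ T01 ↔ r ≠ 2 ∧ m ∈ T01 := by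
  by_cases h0 : r = 0 ∧ m = 0
  · obtain ⟨rfl, rfl⟩ := h0
    simp
  · have : Nat.digits 3 (r + 3 * m) = r :: Nat.digits 3 m :=
      Nat.digits_add 3 (by norm_num) r m hr (by omega)
    simp only [T01, Set.mem_ofPred_eq, this, List.mem_cons, forall_eq_or_imp]
    have : (r = 0 ∨ r = 1) ↔ r ≠ 2 := by omega
    rw [this]

open Classical in
theorem ct_main (n : ℕ) :
    ((centralTrinomial n : ℤ) : ZMod 3) = if n ∈ T01 then 1 else 0 := by
  induction n using Nat.strong_induction_on with
  | _ n ih =>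
    by_cases hn : n = 0
    · subst hn
      simp [ct_cast, T01]
    · have hd : n % 3 + 3 * (n / 3) = n := Nat.mod_add_div n 3
      have hr : n % 3 < 3 := Nat.mod_lt _ (by norm_num)
      have a := ct_step (n / 3) _ hr
      have b := T01_step (n / 3) _ hr
      rw [hd] at a b
      rw [a, ih (n / 3) (by omega)]
      by_cases h2 : n % 3 = 2 <;> simp [b, h2]

/-- Central trinomial coefficients mod 3: `T_n ≡ 1 (mod 3)` if all base-3 digits of
`n` are `0` or `1`, and `T_n ≡ 0 (mod 3)` otherwise. -/
theorem centralTrinomial_mod_three (n : ℕ) :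
    (n ∈ T01 → centralTrinomial n ≡ 1 [ZMOD 3]) ∧
    (n ∉ T01 → centralTrinomial n ≡ 0 [ZMOD 3]) := by
  have h := ct_main n
  constructor <;> intro hn
  · exact (ZMod.intCast_eq_intCast_iff _ _ 3).1 (by simpa [hn] using h)
  · exact (ZMod.intCast_eq_intCast_iff _ _ 3).1 (by simpa [hn] using h)
end

section
/- For every natural number n, the Catalan number satisfies: C_n ≡ (−1)^{δ_3^*(n+1)} (mod 3) if n + 1 ∈ T^*(01), and C_n ≡ 0 (mod 3) otherwise. -/
/-- `T*(01)`: the natural numbers all of whose base-3 digits except possibly the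
least significant one are `0` or `1`. -/
def T01star : Set ℕ := {n | ∀ d ∈ (Nat.digits 3 n).tail, d = 0 ∨ d = 1}

/-- `δ_3^* n`: the number of base-3 digits of `n`, excluding the least significant
one, that are equal to `1`. -/
def delta3star (n : ℕ) : ℕ := ((Nat.digits 3 n).tail).count 1

lemma aux_lucas (a b i j : ℕ) (hi : i < 3) (hj : j < 3) :
    ((3 * a + i).choose (3 * b + j) : ℤ) ≡ (i.choose j : ℤ) * (a.choose b : ℤ) [ZMOD 3] := by
  haveI : Fact (Nat.Prime 3) := ⟨Nat.prime_three⟩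
  have h := Choose.choose_modEq_choose_mod_mul_choose_div (p := 3) (n := 3 * a + i) (k := 3 * b + j)
  have h1 : (3 * a + i) % 3 = i := by omega
  have h2 : (3 * b + j) % 3 = j := by omega
  have h3 : (3 * a + i) / 3 = a := by omega
  have h4 : (3 * b + j) / 3 = b := by omega
  rw [h1, h2, h3, h4] at h
  exact_mod_cast h

lemma aux_cb (q : ℕ) :
    ((∀ d ∈ Nat.digits 3 q, d = 0 ∨ d = 1) →
      ((2 * q).choose q : ℤ) ≡ (-1) ^ ((Nat.digits 3 q).count 1) [ZMOD 3]) ∧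
    ((¬ ∀ d ∈ Nat.digits 3 q, d = 0 ∨ d = 1) → ((2 * q).choose q : ℤ) ≡ 0 [ZMOD 3]) := by
  induction q using Nat.strong_induction_on with
  | _ q ih =>
  rcases Nat.eq_zero_or_pos q with rfl | hq
  · simp
  have ih' := ih (q / 3) (by omega)
  rw [Nat.digits_def' (by norm_num) hq]
  obtain ⟨k, r, hr, rfl⟩ : ∃ k r, r < 3 ∧ q = 3 * k + r :=
    ⟨q / 3, q % 3, by omega, by omega⟩
  have h3 : (3 * k + r) / 3 = k := by omega
  have h4 : (3 * k + r) % 3 = r := by omega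
  rw [h3] at ih'
  rw [h3, h4]
  obtain ⟨i1, i2⟩ := ih'
  simp only [List.forall_mem_cons]
  interval_cases r
  · have h := aux_lucas (2 * k) k 0 0 (by norm_num) (by norm_num)
    rw [show 3 * (2 * k) + 0 = 2 * (3 * k + 0) by ring] at h
    simp only [Nat.choose_self, Nat.cast_one, one_mul] at h
    simp only [true_or, true_and, List.count_cons]
    exact ⟨fun hd => h.trans (by simpa using i1 hd), fun hd => h.trans (i2 hd)⟩
  · have h := aux_lucas (2 * k) k 2 1 (by norm_num) (by norm_num)
    rw [show 3 * (2 * k) + 2 = 2 * (3 * k + 1) by ring] at h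
    simp only [Nat.choose_one_right, Nat.cast_ofNat] at h
    have h2 : (2 : ℤ) * ((2 * k).choose k : ℤ) ≡ (-1) * ((2 * k).choose k : ℤ) [ZMOD 3] :=
      Int.ModEq.mul_right _ (by decide)
    have h := h.trans h2
    simp only [or_true, true_and, List.count_cons]
    refine ⟨fun hd => h.trans ?_, fun hd => h.trans ?_⟩
    · simpa [pow_succ] using (i1 hd).mul_left (-1)
    · simpa using (i2 hd).mul_left (-1)
  · have h := aux_lucas (2 * k + 1) k 1 2 (by norm_num) (by norm_num)
    rw [show 3 * (2 * k + 1) + 1 = 2 * (3 * k + 2) by ring] at h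
    refine ⟨fun hd => by simp at hd, fun _ => ?_⟩
    simpa using h

lemma aux_cat (n : ℕ) : (catalan n : ℤ) = (2 * n).choose n - (2 * n).choose (n + 1) := by
  have h1 := succ_mul_catalan_eq_centralBinom n
  have h2 := Nat.choose_succ_right_eq (2 * n) n
  rw [show 2 * n - n = n by omega] at h2
  rw [Nat.centralBinom_eq_two_mul_choose] at h1
  zify at h1 h2
  have h0 : ((n : ℤ) + 1) ≠ 0 := by positivity
  apply mul_left_cancel₀ h0
  linear_combination h1 + h2

lemma aux_main (n : ℕ) :
    (catalan n : ℤ) ≡ ((2 * ((n + 1) / 3)).choose ((n + 1) / 3) : ℤ) [ZMOD 3] := by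
  rw [aux_cat]
  obtain ⟨k, r, hr, rfl⟩ : ∃ k r, r < 3 ∧ n = 3 * k + r :=
    ⟨n / 3, n % 3, by omega, by omega⟩
  interval_cases r
  · have h := aux_lucas (2 * k) k 0 0 (by norm_num) (by norm_num)
    have h' := aux_lucas (2 * k) k 0 1 (by norm_num) (by norm_num)
    rw [show (3 * k + 0 + 1) / 3 = k by omega]
    rw [show 3 * (2 * k) + 0 = 2 * (3 * k + 0) by ring] at h h'
    simpa using h.sub h'
  · have h := aux_lucas (2 * k) k 2 1 (by norm_num) (by norm_num)
    have h' := aux_lucas (2 * k) k 2 2 (by norm_num) (by norm_num)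
    rw [show (3 * k + 1 + 1) / 3 = k by omega]
    rw [show 3 * (2 * k) + 2 = 2 * (3 * k + 1) by ring] at h h'
    have h2 := h.sub h'
    simp only [Nat.choose_one_right, Nat.choose_self, Nat.cast_ofNat, Nat.cast_one] at h2
    rw [show (2 : ℤ) * ((2 * k).choose k : ℤ) - 1 * ((2 * k).choose k : ℤ)
      = ((2 * k).choose k : ℤ) by ring] at h2
    exact h2
  · have h := aux_lucas (2 * k + 1) k 1 2 (by norm_num) (by norm_num)
    have h' := aux_lucas (2 * k + 1) (k + 1) 1 0 (by norm_num) (by norm_num)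
    rw [show (3 * k + 2 + 1) / 3 = k + 1 by omega]
    rw [show 3 * (2 * k + 1) + 1 = 2 * (3 * k + 2) by ring] at h h'
    rw [show 3 * (k + 1) + 0 = 3 * k + 2 + 1 by ring] at h'
    have h2 := h.sub h'
    refine h2.trans ?_
    have e : (2 * (k + 1)).choose (k + 1) = 2 * (2 * k + 1).choose (k + 1) := by
      rw [show 2 * (k + 1) = (2 * k + 1) + 1 by ring, Nat.choose_succ_succ,
        Nat.choose_symm_half k]
      ring
    rw [e]
    simp only [Nat.choose_zero_right, Nat.choose_eq_zero_of_lt (show 1 < 2 by norm_num)]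
    push_cast
    rw [Int.modEq_iff_dvd]
    exact ⟨((2 * k + 1).choose (k + 1) : ℤ), by ring⟩

/-- Catalan numbers mod 3: `C n ≡ (-1)^{δ_3^*(n+1)} (mod 3)` if `n + 1 ∈ T^*(01)`,
and `C n ≡ 0 (mod 3)` otherwise. -/
theorem catalan_mod_three (n : ℕ) :
    (n + 1 ∈ T01star → (catalan n : ℤ) ≡ (-1) ^ delta3star (n + 1) [ZMOD 3]) ∧
    (n + 1 ∉ T01star → (catalan n : ℤ) ≡ 0 [ZMOD 3]) := by
  have ht : (Nat.digits 3 (n + 1)).tail = Nat.digits 3 ((n + 1) / 3) := by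
    rw [Nat.digits_def' (by norm_num) (Nat.succ_pos n)]
    rfl
  unfold T01star delta3star
  rw [Set.mem_setOf_eq, ht]
  obtain ⟨h1, h2⟩ := aux_cb ((n + 1) / 3)
  exact ⟨fun h => (aux_main n).trans (h1 h), fun h => (aux_main n).trans (h2 h)⟩
end

section
/- Let p be a prime and n a natural number. Then binomial(n, k) is not divisible by p for every k with 0 ≤ k ≤ n if and only if n = q · p^k − 1 for some integers q and k with 1 ≤ q < p and k ≥ 0. -/
theorem pascal_aux_step (p : ℕ) (hp : p.Prime) (n : ℕ) (hn : p ≤ n) :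
    (∀ k ≤ n, ¬ p ∣ n.choose k) ↔
      (n % p + 1 = p ∧ ∀ k ≤ n / p, ¬ p ∣ (n / p).choose k) := by
  haveI : Fact p.Prime := ⟨hp⟩
  have hpos := hp.pos
  have hlt := Nat.mod_lt n hpos
  have luc : ∀ k, p ∣ n.choose k ↔ p ∣ (n % p).choose (k % p) * (n / p).choose (k / p) := by
    intro k
    exact (Choose.choose_modEq_choose_mod_mul_choose_div_nat (n := n) (k := k) (p := p)).dvd_iff
      dvd_rfl
  constructor
  · intro h
    constructor
    · by_contra hne
      apply h (n % p + 1) (by omega)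
      rw [luc, Nat.mod_eq_of_lt (a := n % p + 1) (by omega), Nat.choose_succ_self]
      simp
    · intro k hk hd
      have h1 : p * k ≤ n := (Nat.mul_le_mul_left p hk).trans (Nat.mul_div_le n p)
      apply h (p * k) h1
      rw [luc, Nat.mul_mod_right, Nat.mul_div_cancel_left _ hpos]
      simpa using hd
  · rintro ⟨hb, h⟩ k hk hd
    rw [luc, hp.dvd_mul] at hd
    rcases hd with hd | hd
    · have hkm := Nat.mod_lt k hpos
      have h2 : (n % p).choose (k % p) ∣ (n % p).factorial :=
        ⟨_, by rw [← mul_assoc]; exact (Nat.choose_mul_factorial_mul_factorial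
          (show k % p ≤ n % p by omega)).symm⟩
      have := (hp.dvd_factorial).1 (hd.trans h2)
      omega
    · exact h _ (Nat.div_le_div_right hk) hd

/-- For a prime `p`, every entry of the `n`-th row of Pascal's triangle is nonzero
modulo `p` iff `n = q ⬝ p^k - 1` for some `1 ≤ q < p` and `k ≥ 0`. -/
theorem pascal_row_nonzero_mod_p_iff (p : ℕ) (hp : p.Prime) (n : ℕ) :
    (∀ k ≤ n, ¬ p ∣ n.choose k) ↔ ∃ q k : ℕ, 1 ≤ q ∧ q < p ∧ n + 1 = q * p ^ k := by
  induction n using Nat.strong_induction_on with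
  | _ n ih =>
  have hpos := hp.pos
  rcases Nat.lt_or_ge n p with hn | hn
  · constructor
    · intro _
      rcases Nat.lt_or_ge (n + 1) p with h | h
      · exact ⟨n + 1, 0, by omega, h, by simp⟩
      · exact ⟨1, 1, le_rfl, hp.one_lt, by simp; omega⟩
    · intro _ k hk hd
      have h2 : n.choose k ∣ n.factorial :=
        ⟨_, by rw [← mul_assoc]; exact (Nat.choose_mul_factorial_mul_factorial hk).symm⟩
      have := (hp.dvd_factorial).1 (hd.trans h2)
      omega
  · rw [pascal_aux_step p hp n hn, ih (n / p) (Nat.div_lt_self (by omega) hp.one_lt)]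
    have hdm := Nat.div_add_mod n p
    constructor
    · rintro ⟨hb, q, k, h1, h2, h3⟩
      refine ⟨q, k + 1, h1, h2, ?_⟩
      have : n + 1 = (n / p + 1) * p := by
        rw [add_mul, mul_comm]; omega
      rw [this, h3, pow_succ, mul_assoc]
    · rintro ⟨q, k, h1, h2, h3⟩
      cases k with
      | zero => simp at h3; omega
      | succ k =>
        have h4 : n + 1 = p * (q * p ^ k) := by rw [h3]; ring
        obtain ⟨m, hm⟩ : ∃ m, q * p ^ k = m + 1 :=
          Nat.exists_eq_succ_of_ne_zero (by positivity)
        rw [hm, mul_add] at h4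
        have h5 : n = (p - 1) + p * m := by omega
        have h6 : n / p = m := by
          rw [h5, Nat.add_mul_div_left _ _ hpos, Nat.div_eq_of_lt (by omega), zero_add]
        have h7 : n % p = p - 1 := by
          rw [h5, Nat.add_mul_mod_self_left, Nat.mod_eq_of_lt (by omega)]
        exact ⟨by omega, q, k, h1, h2, by rw [h6, hm]⟩
end
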